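/- Let P and Q be independent, positive, non-degenerate real random variables with E(P) < ∞, E(Q) < ∞, E(P⁻²) < ∞ and E(Q⁻²) < ∞. Then (E[ PQ/(P² + Q²)^{1/2} ])² > 1/(E(P⁻²) + E(Q⁻²)). -/

import Mathlib

open MeasureTheory ProbabilityTheory

noncomputable section

lemma aux_const {Ω : Type*} [MeasurableSpace Ω] (Pr : Measure Ω) [IsProbabilityMeasure Pr]
    (X Y : Ω → ℝ) (hX : Integrable X Pr) (hY : Integrable Y Pr) (h : IndepFun X Y Pr) (s : ℝ)
    (hs : ∀ᵐ ω ∂Pr, X ω + Y ω = s) : ∃ c : ℝ, ∀ᵐ ω ∂Pr, X ω = c := by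
  have hXY : Integrable (fun ω => X ω * Y ω) Pr := h.integrable_mul hX hY
  have e1 : ∫ ω, X ω * Y ω ∂Pr = (∫ ω, X ω ∂Pr) * ∫ ω, Y ω ∂Pr :=
    h.integral_fun_mul_eq_mul_integral hX.aestronglyMeasurable hY.aestronglyMeasurable
  have e2 : (∫ ω, X ω ∂Pr) + ∫ ω, Y ω ∂Pr = s := by
    rw [← integral_add hX hY, integral_congr_ae hs]; simp
  set m := ∫ ω, X ω ∂Pr with hm
  have hae : (fun ω => (X ω - m) ^ 2) =ᵐ[Pr] fun ω => ((s - 2 * m) * X ω - X ω * Y ω) + m ^ 2 := by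
    filter_upwards [hs] with ω h
    rw [← h]; ring
  have hi0 : Integrable (fun ω => (s - 2 * m) * X ω - X ω * Y ω) Pr := (hX.const_mul _).sub hXY
  have hi : Integrable (fun ω => (X ω - m) ^ 2) Pr :=
    (hi0.add (integrable_const (m ^ 2))).congr hae.symm
  have h0 : ∫ ω, (X ω - m) ^ 2 ∂Pr = 0 := by
    rw [integral_congr_ae hae, integral_add hi0 (integrable_const _),
      integral_sub (hX.const_mul _) hXY, integral_const_mul, e1, ← hm, ← e2]
    simp
    ring
  rw [integral_eq_zero_iff_of_nonneg (fun ω => sq_nonneg _) hi] at h0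
  refine ⟨m, ?_⟩
  filter_upwards [h0] with ω h
  have : (X ω - m) ^ 2 = 0 := h
  have := pow_eq_zero_iff (two_ne_zero) |>.1 this
  linarith

lemma aux_z (p q : ℝ) (hp : 0 < p) (hq : 0 < q) :
    0 < p * q / Real.sqrt (p ^ 2 + q ^ 2) ∧
    (p⁻¹ ^ 2 + q⁻¹ ^ 2) * (p * q / Real.sqrt (p ^ 2 + q ^ 2)) ^ 2 = 1 := by
  refine ⟨by positivity, ?_⟩
  rw [div_pow, Real.sq_sqrt (by positivity)]
  field_simp
  ring

lemma aux_tan (z a t : ℝ) (hz : 0 < z) (ht : 0 < t) (h : a * z ^ 2 = 1) :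
    0 ≤ z - (3 / 2 * t - t ^ 3 / 2 * a) ∧
    (z - (3 / 2 * t - t ^ 3 / 2 * a) = 0 → z = t) := by
  have ha : a = 1 / z ^ 2 := by field_simp; linarith
  have e : z - (3 / 2 * t - t ^ 3 / 2 * a) = (z - t) ^ 2 * ((2 * z + t) / (2 * z ^ 2)) := by
    rw [ha]; field_simp; ring
  rw [e]
  refine ⟨by positivity, fun h0 => ?_⟩
  have hne : (2 * z + t) / (2 * z ^ 2) ≠ 0 := by positivity
  have := (mul_eq_zero.1 h0).resolve_right hne
  have := pow_eq_zero_iff (two_ne_zero) |>.1 this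
  linarith

/-- if `P` and `Q` are independent, positive, non-degenerate real random
variables with `E(P), E(Q), E(P⁻²), E(Q⁻²) < ∞`, then
`(E[PQ/(P²+Q²)^{1/2}])² > 1/(E(P⁻²) + E(Q⁻²))`. -/
theorem stmt_18
    {Ω : Type*} [MeasurableSpace Ω] (Pr : Measure Ω) [IsProbabilityMeasure Pr]
    (Pv Qv : Ω → ℝ)
    (hPmeas : Measurable Pv) (hQmeas : Measurable Qv)
    (hindep : IndepFun Pv Qv Pr)
    (hPpos : ∀ᵐ ω ∂Pr, 0 < Pv ω) (hQpos : ∀ᵐ ω ∂Pr, 0 < Qv ω)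
    (hPnondeg : ¬ ∃ c : ℝ, ∀ᵐ ω ∂Pr, Pv ω = c)
    (hQnondeg : ¬ ∃ c : ℝ, ∀ᵐ ω ∂Pr, Qv ω = c)
    (hPint : Integrable Pv Pr) (hQint : Integrable Qv Pr)
    (hPinv : Integrable (fun ω => (Pv ω) ⁻¹ ^ 2) Pr)
    (hQinv : Integrable (fun ω => (Qv ω) ⁻¹ ^ 2) Pr) :
    (∫ ω, Pv ω * Qv ω / Real.sqrt (Pv ω ^ 2 + Qv ω ^ 2) ∂Pr) ^ 2
      > 1 / (∫ ω, (Pv ω) ⁻¹ ^ 2 ∂Pr + ∫ ω, (Qv ω) ⁻¹ ^ 2 ∂Pr) := by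
  have hZ : Integrable (fun ω => Pv ω * Qv ω / Real.sqrt (Pv ω ^ 2 + Qv ω ^ 2)) Pr := by
    refine hPint.mono (Measurable.aestronglyMeasurable (by fun_prop)) ?_
    filter_upwards [hPpos, hQpos] with ω hp hq
    rw [Real.norm_of_nonneg (aux_z _ _ hp hq).1.le, Real.norm_of_nonneg hp.le,
      div_le_iff₀ (by positivity)]
    gcongr
    exact Real.le_sqrt_of_sq_le (by nlinarith)
  have hA : Integrable (fun ω => (Pv ω)⁻¹ ^ 2 + (Qv ω)⁻¹ ^ 2) Pr := hPinv.add hQinv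
  rw [← integral_add hPinv hQinv]
  set s := ∫ ω, ((Pv ω)⁻¹ ^ 2 + (Qv ω)⁻¹ ^ 2) ∂Pr with hsdef
  have hs : 0 < s := by
    have hnn : 0 ≤ s := integral_nonneg fun ω => by positivity
    refine lt_of_le_of_ne hnn fun h0 => ?_
    have h1 := (integral_eq_zero_iff_of_nonneg (fun ω => by positivity) hA).1 h0.symm
    have h2 : ∀ᵐ ω ∂Pr, False := by
      filter_upwards [h1, hPpos, hQpos] with ω h hp hq
      have h' : (Pv ω)⁻¹ ^ 2 + (Qv ω)⁻¹ ^ 2 = 0 := h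
      have : 0 < (Pv ω)⁻¹ ^ 2 + (Qv ω)⁻¹ ^ 2 := by positivity
      linarith
    obtain ⟨ω, h⟩ := h2.exists
    exact h
  set t := Real.sqrt (1 / s) with htdef
  have ht : 0 < t := Real.sqrt_pos.2 (by positivity)
  have ht2 : t ^ 2 = 1 / s := Real.sq_sqrt (by positivity)
  have hst : s * t ^ 2 = 1 := by rw [ht2]; field_simp
  rw [← ht2]
  refine pow_lt_pow_left₀ ?_ ht.le two_ne_zero
  set Z : Ω → ℝ := fun ω => Pv ω * Qv ω / Real.sqrt (Pv ω ^ 2 + Qv ω ^ 2) with hZdef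
  have hT : Integrable (fun ω => 3 / 2 * t - t ^ 3 / 2 * ((Pv ω)⁻¹ ^ 2 + (Qv ω)⁻¹ ^ 2)) Pr :=
    (integrable_const _).sub (hA.const_mul _)
  have hI : ∫ ω, (Z ω - (3 / 2 * t - t ^ 3 / 2 * ((Pv ω)⁻¹ ^ 2 + (Qv ω)⁻¹ ^ 2))) ∂Pr
      = (∫ ω, Z ω ∂Pr) - t := by
    rw [integral_sub hZ hT, integral_sub (integrable_const _) (hA.const_mul _),
      integral_const_mul (t ^ 3 / 2), ← hsdef]
    simp
    linear_combination (-t / 2) * hst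
  have hnn : 0 ≤ᵐ[Pr] fun ω =>
      Z ω - (3 / 2 * t - t ^ 3 / 2 * ((Pv ω)⁻¹ ^ 2 + (Qv ω)⁻¹ ^ 2)) := by
    filter_upwards [hPpos, hQpos] with ω hp hq
    obtain ⟨h1, h2⟩ := aux_z _ _ hp hq
    exact (aux_tan _ _ t h1 ht h2).1
  by_contra hcon
  have hle : (∫ ω, Z ω ∂Pr) ≤ t := not_lt.1 hcon
  have h0 := integral_nonneg_of_ae hnn
  have h0' : ∫ ω, (Z ω - (3 / 2 * t - t ^ 3 / 2 * ((Pv ω)⁻¹ ^ 2 + (Qv ω)⁻¹ ^ 2))) ∂Pr = 0 := by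
    linarith
  rw [integral_eq_zero_iff_of_nonneg_ae hnn (hZ.sub hT)] at h0'
  have hconst : ∀ᵐ ω ∂Pr, (Pv ω)⁻¹ ^ 2 + (Qv ω)⁻¹ ^ 2 = s := by
    filter_upwards [hPpos, hQpos, h0'] with ω hp hq h
    obtain ⟨h1, h2⟩ := aux_z _ _ hp hq
    have h3 := (aux_tan _ _ t h1 ht h2).2 h
    rw [h3] at h2
    have : t ^ 2 ≠ 0 := by positivity
    exact mul_right_cancel₀ this (h2.trans hst.symm)
  have hind : IndepFun (fun ω => (Pv ω)⁻¹ ^ 2) (fun ω => (Qv ω)⁻¹ ^ 2) Pr :=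
    hindep.comp (φ := fun x : ℝ => x⁻¹ ^ 2) (ψ := fun x : ℝ => x⁻¹ ^ 2)
      (by fun_prop) (by fun_prop)
  obtain ⟨c, hc⟩ := aux_const Pr _ _ hPinv hQinv hind s hconst
  refine hPnondeg ⟨(Real.sqrt c)⁻¹, ?_⟩
  filter_upwards [hc, hPpos] with ω h hp
  rw [← h, Real.sqrt_sq (by positivity), inv_inv]

end
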